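/- Let Z ∈ L^∞_T and (X_s) ∈ 𝓐_{1,t}(Z). Then (X_s) attains the essential supremum esssup_{(Y_s)∈𝓐_{1,t}(Z)} Σ_{s=t}^T E[u_s(Y_s) | 𝓕_t] if and only if the process (u_s'(X_s))_{s=t,…,T} is a martingale with respect to (𝓕_s). -/

import Mathlib

open MeasureTheory Filter

variable {Ω : Type*}

/-- `X ∈ L^∞(m)`: `m`-measurable and (essentially) bounded. -/
def MeasBdd (m : MeasurableSpace Ω) (X : Ω → ℝ) : Prop :=
  Measurable[m] X ∧ ∃ C : ℝ, ∀ ω, |X ω| ≤ C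

/-- `u` is a utility function (strictly increasing, strictly concave, `C¹`) with
derivative `u'` satisfying `u 0 = 0`, `u' 0 = 1`, `u'(+∞) = 0`, `u'(-∞) = +∞`. -/
structure IsUtility (u u' : ℝ → ℝ) : Prop where
  strictMono : StrictMono u
  strictConcave : StrictConcaveOn ℝ Set.univ u
  hasDeriv : ∀ x, HasDerivAt u (u' x) x
  derivCont : Continuous u'
  zero : u 0 = 0
  deriv_zero : u' 0 = 1
  deriv_top : Tendsto u' atTop (nhds 0)
  deriv_bot : Tendsto u' atBot atTop

/-- A one-product diversification of `Z` at time `t`: an adapted family `(X s)`,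
`s = t,…,T`, of essentially bounded random variables summing to `Z`. -/
def IsDiv1 {m0 : MeasurableSpace Ω} (P : Measure Ω) (ℱ : Filtration ℕ m0)
    (t T : ℕ) (Z : Ω → ℝ) (X : ℕ → Ω → ℝ) : Prop :=
  (∀ s ∈ Finset.Icc t T, MeasBdd (ℱ s) (X s)) ∧
  ∀ᵐ ω ∂P, (∑ s ∈ Finset.Icc t T, X s ω) = Z ω

/-- The total conditional expected utility `∑_{s=t}^T E[u_s(X_s) | 𝓕_t]`. -/
noncomputable def utilSum1 {m0 : MeasurableSpace Ω} (P : Measure Ω) (ℱ : Filtration ℕ m0)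
    (u : ℕ → ℝ → ℝ) (t T : ℕ) (X : ℕ → Ω → ℝ) : Ω → ℝ :=
  fun ω => ∑ s ∈ Finset.Icc t T, (P[fun ω' => u s (X s ω') | ℱ t]) ω

theorem MeasBdd.mono' {m m' : MeasurableSpace Ω} (h : m ≤ m') {X : Ω → ℝ} (hX : MeasBdd m X) :
    MeasBdd m' X := ⟨hX.1.mono h le_rfl, hX.2⟩

theorem MeasBdd.comp' {m : MeasurableSpace Ω} {X : Ω → ℝ} (hX : MeasBdd m X) {f : ℝ → ℝ}
    (hf : Continuous f) : MeasBdd m (fun ω => f (X ω)) := by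
  obtain ⟨h1, C, hC⟩ := hX
  refine ⟨hf.measurable.comp h1, ?_⟩
  obtain ⟨K, hK⟩ := (isCompact_Icc (a := -C) (b := C)).exists_bound_of_continuousOn hf.continuousOn
  exact ⟨K, fun ω => hK _ (abs_le.1 (hC ω))⟩

theorem MeasBdd.add' {m : MeasurableSpace Ω} {X Y : Ω → ℝ} (hX : MeasBdd m X) (hY : MeasBdd m Y) :
    MeasBdd m (fun ω => X ω + Y ω) := by
  obtain ⟨h1, C, hC⟩ := hX
  obtain ⟨h2, D, hD⟩ := hY
  exact ⟨h1.add h2, C + D, fun ω => (abs_add_le _ _).trans (add_le_add (hC ω) (hD ω))⟩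

theorem MeasBdd.mul' {m : MeasurableSpace Ω} {X Y : Ω → ℝ} (hX : MeasBdd m X) (hY : MeasBdd m Y) :
    MeasBdd m (fun ω => X ω * Y ω) := by
  obtain ⟨h1, C, hC⟩ := hX
  obtain ⟨h2, D, hD⟩ := hY
  refine ⟨h1.mul h2, C * D, fun ω => ?_⟩
  rw [abs_mul]
  exact mul_le_mul (hC ω) (hD ω) (abs_nonneg _) ((abs_nonneg _).trans (hC ω))

theorem MeasBdd.const' (m : MeasurableSpace Ω) (c : ℝ) : MeasBdd m (fun _ => c) :=
  ⟨measurable_const, |c|, fun _ => le_rfl⟩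

theorem MeasBdd.sub' {m : MeasurableSpace Ω} {X Y : Ω → ℝ} (hX : MeasBdd m X) (hY : MeasBdd m Y) :
    MeasBdd m (fun ω => X ω - Y ω) := by
  have := hX.add' ((MeasBdd.const' m (-1)).mul' hY)
  simpa [sub_eq_add_neg] using this

theorem MeasBdd.integrable' {m m0 : MeasurableSpace Ω} (h : m ≤ m0) {P : Measure Ω}
    [IsProbabilityMeasure P] {X : Ω → ℝ} (hX : MeasBdd m X) : Integrable X P := by
  obtain ⟨h1, C, hC⟩ := hX
  exact Integrable.of_bound (h1.mono h le_rfl).aestronglyMeasurable C (Eventually.of_forall hC)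

theorem IsUtility.cont {u u' : ℝ → ℝ} (h : IsUtility u u') : Continuous u :=
  continuous_iff_continuousAt.2 fun x => (h.hasDeriv x).continuousAt

theorem IsUtility.tangent {u u' : ℝ → ℝ} (h : IsUtility u u') (x y : ℝ) :
    u y ≤ u x + u' x * (y - x) := by
  have hc := h.strictConcave.concaveOn
  rcases lt_trichotomy x y with hxy | rfl | hxy
  · have := hc.slope_le_of_hasDerivAt (Set.mem_univ x) (Set.mem_univ y) hxy (h.hasDeriv x)
    rw [slope_def_field, div_le_iff₀ (by linarith)] at this
    linarith
  · simp
  · have := hc.le_slope_of_hasDerivAt (Set.mem_univ y) (Set.mem_univ x) hxy (h.hasDeriv x)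
    rw [slope_def_field, le_div_iff₀ (by linarith)] at this
    linarith

theorem hasDerivAt_util {m0 : MeasurableSpace Ω} (P : Measure Ω) [IsProbabilityMeasure P]
    {u u' : ℝ → ℝ} (h : IsUtility u u') {X H : Ω → ℝ} (hX : MeasBdd m0 X) (hH : MeasBdd m0 H) :
    HasDerivAt (fun e : ℝ => ∫ ω, u (X ω + e * H ω) ∂P) (∫ ω, u' (X ω) * H ω ∂P) 0 := by
  obtain ⟨-, C, hC⟩ := id hX
  obtain ⟨-, D, hD⟩ := id hH
  obtain ⟨K, hK⟩ := (isCompact_Icc (a := -(C + D)) (b := C + D)).exists_bound_of_continuousOn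
    h.derivCont.continuousOn
  have hm : ∀ e : ℝ, MeasBdd m0 (fun ω => X ω + e * H ω) := fun e =>
    hX.add' ((MeasBdd.const' m0 e).mul' hH)
  have key := hasDerivAt_integral_of_dominated_loc_of_deriv_le (μ := P) (𝕜 := ℝ)
    (F := fun e ω => u (X ω + e * H ω)) (F' := fun e ω => u' (X ω + e * H ω) * H ω)
    (x₀ := 0) (s := Metric.ball 0 1) (bound := fun _ => K * D) (Metric.ball_mem_nhds 0 one_pos)
    (Eventually.of_forall fun e => ((hm e).comp' h.cont).1.aestronglyMeasurable)
    (((hm 0).comp' h.cont).integrable' le_rfl)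
    ((((hm 0).comp' h.derivCont).mul' hH).1.aestronglyMeasurable)
    (Eventually.of_forall fun ω e he => by
      have he' : |e| ≤ 1 := by
        have := (mem_ball_zero_iff.1 he).le
        simpa using this
      have h2 : |X ω + e * H ω| ≤ C + D := by
        refine (abs_add_le _ _).trans (add_le_add (hC ω) ?_)
        rw [abs_mul]
        calc |e| * |H ω| ≤ 1 * |H ω| := by gcongr
          _ ≤ D := by simpa using hD ω
      have h3 := hK _ (abs_le.1 h2)
      rw [norm_mul]
      exact mul_le_mul h3 (hD ω) (norm_nonneg _) ((norm_nonneg _).trans h3))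
    (integrable_const _)
    (Eventually.of_forall fun ω e _ => by
      have h1 : HasDerivAt (fun e : ℝ => X ω + e * H ω) (H ω) e := by
        simpa using ((hasDerivAt_id e).mul_const (H ω)).const_add (X ω)
      exact (h.hasDeriv _).comp e h1)
  simpa using key.2

theorem integral_utilSum1 {m0 : MeasurableSpace Ω} (P : Measure Ω) [IsProbabilityMeasure P]
    (ℱ : Filtration ℕ m0) (u : ℕ → ℝ → ℝ) (t T : ℕ) (X : ℕ → Ω → ℝ) :
    ∫ ω, utilSum1 P ℱ u t T X ω ∂P = ∑ s ∈ Finset.Icc t T, ∫ ω, u s (X s ω) ∂P := by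
  unfold utilSum1
  rw [integral_finsetSum _ fun i _ => integrable_condExp]
  exact Finset.sum_congr rfl fun i _ => integral_condExp (ℱ.le t)

theorem integrable_utilSum1 {m0 : MeasurableSpace Ω} (P : Measure Ω) [IsProbabilityMeasure P]
    (ℱ : Filtration ℕ m0) (u : ℕ → ℝ → ℝ) (t T : ℕ) (X : ℕ → Ω → ℝ) :
    Integrable (utilSum1 P ℱ u t T X) P :=
  integrable_finsetSum _ fun i _ => integrable_condExp

/-- Corollary 2.18: `(X_s) ∈ 𝓐_{1,t}(Z)` attains the essential supremum
`esssup_{(Y_s)} Σ_{s=t}^T E[u_s(Y_s)|𝓕_t]` iff `(u_s'(X_s))_{s=t,…,T}` is a martingale. -/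
theorem one_dim_maximizer_iff_martingale
    {m0 : MeasurableSpace Ω} (P : Measure Ω) [IsProbabilityMeasure P]
    (ℱ : Filtration ℕ m0) (T t : ℕ) (hT : 0 < T) (ht : t ≤ T)
    (u u' : ℕ → ℝ → ℝ) (hu : ∀ s, IsUtility (u s) (u' s))
    (Z : Ω → ℝ) (hZ : MeasBdd (ℱ T) Z)
    (X : ℕ → Ω → ℝ) (hX : IsDiv1 P ℱ t T Z X) :
    -- `X` attains the essential supremum …
    (∀ Y : ℕ → Ω → ℝ, IsDiv1 P ℱ t T Z Y →
      utilSum1 P ℱ u t T Y ≤ᵐ[P] utilSum1 P ℱ u t T X)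
    ↔
    -- … iff `(u_s'(X_s))_{s=t,…,T}` is a martingale w.r.t. `(ℱ s)`:
    (∀ r ∈ Finset.Icc t T, ∀ s ∈ Finset.Icc t T, r ≤ s →
      (P[fun ω => u' s (X s ω) | ℱ r]) =ᵐ[P] fun ω => u' r (X r ω)) := by
  constructor
  · intro hmax r hr s hs hrs
    have hXr := hX.1 r hr
    have hXs := hX.1 s hs
    have hir := (hXr.comp' (hu r).derivCont).integrable' (ℱ.le r) (P := P)
    have his := (hXs.comp' (hu s).derivCont).integrable' (ℱ.le s) (P := P)
    refine (ae_eq_condExp_of_forall_setIntegral_eq (ℱ.le r) his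
      (fun A _ _ => hir.integrableOn) ?_
      (hXr.comp' (hu r).derivCont).1.aestronglyMeasurable).symm
    intro A hA _
    have hA0 : MeasurableSet A := ℱ.le r A hA
    let H : Ω → ℝ := A.indicator 1
    have hH : MeasBdd (ℱ r) H := by
      refine ⟨(@measurable_const ℝ Ω _ (ℱ r) 1).indicator hA, 1, fun ω => ?_⟩
      by_cases hω : ω ∈ A <;> simp [H, hω]
    let c : ℕ → ℝ := fun k => (if k = r then 1 else 0) - (if k = s then 1 else 0)
    have hcH : ∀ k ∈ Finset.Icc t T, MeasBdd (ℱ k) (fun ω => c k * H ω) := by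
      intro k hk
      by_cases hkr : r ≤ k
      · exact (MeasBdd.const' _ _).mul' (hH.mono' (ℱ.mono hkr))
      · have : c k = 0 := by
          have h1 : k ≠ r := by omega
          have h2 : k ≠ s := by omega
          simp [c, h1, h2]
        simpa [this] using MeasBdd.const' (ℱ k) 0
    have hcsum : ∀ g : ℕ → ℝ, ∑ k ∈ Finset.Icc t T, c k * g k = g r - g s := by
      intro g
      simp only [c, sub_mul, Finset.sum_sub_distrib, ite_mul, one_mul, zero_mul,
        Finset.sum_ite_eq', if_pos hr, if_pos hs]
    have hder : HasDerivAt
        (fun e : ℝ => ∑ k ∈ Finset.Icc t T, ∫ ω, u k (X k ω + e * (c k * H ω)) ∂P)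
        (∑ k ∈ Finset.Icc t T, ∫ ω, u' k (X k ω) * (c k * H ω) ∂P) 0 :=
      HasDerivAt.fun_sum fun k hk => hasDerivAt_util P (hu k) ((hX.1 k hk).mono' (ℱ.le k))
        ((hcH k hk).mono' (ℱ.le k))
    have hloc : IsLocalMax
        (fun e : ℝ => ∑ k ∈ Finset.Icc t T, ∫ ω, u k (X k ω + e * (c k * H ω)) ∂P) 0 := by
      refine Eventually.of_forall fun e => ?_
      have hY : IsDiv1 P ℱ t T Z (fun k ω => X k ω + e * (c k * H ω)) := by
        refine ⟨fun k hk => (hX.1 k hk).add' ((MeasBdd.const' _ e).mul' (hcH k hk)), ?_⟩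
        filter_upwards [hX.2] with ω hω
        rw [Finset.sum_add_distrib, ← Finset.mul_sum, hcsum (fun _ => H ω), hω]
        simp
      have h1 := integral_mono_ae (integrable_utilSum1 P ℱ u t T _)
        (integrable_utilSum1 P ℱ u t T _) (hmax _ hY)
      rw [integral_utilSum1, integral_utilSum1] at h1
      simpa using h1
    have h0 := hloc.hasDerivAt_eq_zero hder
    have h1 : ∀ k, ∫ ω, u' k (X k ω) * (c k * H ω) ∂P = c k * ∫ ω in A, u' k (X k ω) ∂P := by
      intro k
      rw [← integral_const_mul, ← integral_indicator hA0]
      refine integral_congr_ae (Eventually.of_forall fun ω => ?_)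
      by_cases hω : ω ∈ A <;> simp [H, hω, mul_comm]
    simp_rw [h1] at h0
    rw [hcsum] at h0
    linarith
  · intro hmart Y hY
    have hTm : T ∈ Finset.Icc t T := Finset.mem_Icc.2 ⟨ht, le_rfl⟩
    have hD : ∀ k ∈ Finset.Icc t T, MeasBdd (ℱ k) (fun ω => Y k ω - X k ω) := fun k hk =>
      (hY.1 k hk).sub' (hX.1 k hk)
    have hT' : MeasBdd m0 (fun ω => u' T (X T ω)) :=
      ((hX.1 T hTm).comp' (hu T).derivCont).mono' (ℱ.le T)
    have hint : ∀ k ∈ Finset.Icc t T,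
        Integrable (fun ω => u' T (X T ω) * (Y k ω - X k ω)) P := fun k hk =>
      (hT'.mul' ((hD k hk).mono' (ℱ.le k))).integrable' le_rfl
    have step : ∀ k ∈ Finset.Icc t T,
        P[fun ω => u k (Y k ω) | ℱ t] ≤ᵐ[P] fun ω => (P[fun ω => u k (X k ω) | ℱ t]) ω +
          (P[fun ω => u' T (X T ω) * (Y k ω - X k ω) | ℱ t]) ω := by
      intro k hk
      have htk := (Finset.mem_Icc.1 hk).1
      have hkT := (Finset.mem_Icc.1 hk).2
      have i1 := ((hY.1 k hk).comp' (hu k).cont).integrable' (ℱ.le k) (P := P)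
      have i2 := ((hX.1 k hk).comp' (hu k).cont).integrable' (ℱ.le k) (P := P)
      have i3 := (((hX.1 k hk).comp' (hu k).derivCont).mul' (hD k hk)).integrable'
        (ℱ.le k) (P := P)
      have a1 := condExp_mono (m := ℱ t) i1 (i2.add i3)
        (Eventually.of_forall fun ω => (hu k).tangent (X k ω) (Y k ω))
      have a2 := condExp_add i2 i3 (ℱ t)
      have a3 : P[fun ω => u' T (X T ω) * (Y k ω - X k ω) | ℱ k] =ᵐ[P]
          fun ω => u' k (X k ω) * (Y k ω - X k ω) := by
        have b1 := condExp_mul_of_stronglyMeasurable_right (μ := P) (m := ℱ k)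
          (f := fun ω => u' T (X T ω)) (g := fun ω => Y k ω - X k ω)
          (hD k hk).1.stronglyMeasurable (hint k hk) (hT'.integrable' le_rfl)
        refine b1.trans ?_
        filter_upwards [hmart k hk T hTm hkT] with ω hω
        simp [hω]
      have a4 := (condExp_congr_ae (m := ℱ t) a3).symm.trans
        (condExp_condExp_of_le (ℱ.mono htk) (ℱ.le k))
      filter_upwards [a1, a2, a4] with ω h1 h2 h4
      rw [← h4]
      exact h1.trans h2.le
    have hzero : (fun ω => ∑ k ∈ Finset.Icc t T,
        (P[fun ω => u' T (X T ω) * (Y k ω - X k ω) | ℱ t]) ω) =ᵐ[P] 0 := by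
      have b1 := condExp_finsetSum hint (ℱ t)
      have b2 : (∑ k ∈ Finset.Icc t T, fun ω => u' T (X T ω) * (Y k ω - X k ω)) =ᵐ[P] 0 := by
        filter_upwards [hX.2, hY.2] with ω h1 h2
        simp [Finset.sum_apply, ← Finset.mul_sum, Finset.sum_sub_distrib, h1, h2]
      have b3 := condExp_congr_ae (m := ℱ t) b2
      rw [condExp_zero] at b3
      filter_upwards [b1, b3] with ω h1 h3
      rw [h3, Finset.sum_apply] at h1
      exact h1.symm
    have step' := (Finset.eventually_all (Finset.Icc t T)).2 step
    filter_upwards [step', hzero] with ω h1 h2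
    have h3 := Finset.sum_le_sum h1
    rw [Finset.sum_add_distrib] at h3
    have h2' : ∑ k ∈ Finset.Icc t T,
        (P[fun ω => u' T (X T ω) * (Y k ω - X k ω) | ℱ t]) ω = 0 := h2
    rw [h2', add_zero] at h3
    exact h3
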